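/- Let 0 < γ < 1, fix x* > 1/(1−γ), and set M_{ν,γ}(x*) = max{ 2(ν+1+x*)/(2ν+1) , x*/((1−γ)x* − 1) }. Then for every ν > −1/2 and every x ≥ x*, ∫_0^x e^{−γt} t^ν I_ν(t) dt < M_{ν,γ}(x*) · e^{−γx} x^ν I_{ν+1}(x). -/

import Mathlib

open Real MeasureTheory

/-- Modified Bessel function of the first kind, `I_ν(x) = ∑_{k} (x/2)^{ν+2k} / (Γ(ν+k+1) k!)`. -/
noncomputable def besselI (ν x : ℝ) : ℝ :=
  ∑' k : ℕ, (x / 2) ^ (ν + 2 * (k : ℝ)) / (Real.Gamma (ν + (k : ℝ) + 1) * (Nat.factorial k : ℝ))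

/-- Modified Bessel function of the second kind, `K_ν(x) = ∫_0^∞ e^{-x cosh t} cosh(ν t) dt`. -/
noncomputable def besselK (ν x : ℝ) : ℝ :=
  ∫ t in Set.Ioi (0 : ℝ), Real.exp (-x * Real.cosh t) * Real.cosh (ν * t)

/-- Lower incomplete gamma function `γ(a, x) = ∫_0^x t^{a-1} e^{-t} dt`. -/
noncomputable def lowerIncGamma (a x : ℝ) : ℝ :=
  ∫ t in (0 : ℝ)..x, t ^ (a - 1) * Real.exp (-t)

/-!
Since `exp (∓t) * t ^ (ν + 1) * (I_ν t ± I_{ν+1} t)` has derivative `(2ν + 1) exp (∓t) t ^ ν I_ν t`,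
the integral is explicit for `γ = ±1`. The case `γ = -1` gives `I_{ν+1} < I_ν`. The case `γ = 1`
bounds the integral over `[0, x₀]` for every `γ ≤ 1`, because `exp ((1 - γ) t)` is increasing, and
together with `x I_ν < (2(ν + 1) + x) I_{ν+1}` this yields the first term of the maximum. On
`[x₀, x]` the integrand is at most `M` times the derivative
`exp (-γt) t ^ ν (I_ν t - (γ + 1 / t) I_{ν+1} t)` of the right-hand side: as `I_{ν+1} < I_ν`, this
holds if `M ≥ 1` (relevant when `γ + 1 / t < 0`) and `1 ≤ M (1 - γ - 1 / x₀)`, and the latter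
condition is the second term.
-/

open Set Filter Topology
open scoped Nat

/-- The coefficient `1 / (Γ(μ + k + 1) k!)` of the Bessel–Clifford function. At the poles of `Γ`
the conventions `Γ(-n) = 0` and `1 / 0 = 0` give the value of the entire function `1 / Γ`. -/
noncomputable def besselCliffordCoeff (μ : ℝ) (k : ℕ) : ℝ :=
  1 / (Gamma (μ + k + 1) * k !)

/-- The Bessel–Clifford function `C_μ(y) = ∑ k, y ^ k / (Γ(μ + k + 1) k!)`, the entire function
underlying the modified Bessel function: `I_μ(x) = (x / 2) ^ μ * C_μ(x ^ 2 / 4)`. -/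
noncomputable def besselClifford (μ y : ℝ) : ℝ :=
  ∑' k : ℕ, besselCliffordCoeff μ k * y ^ k

section BesselClifford

variable {μ : ℝ}

lemma besselCliffordCoeff_pos (hμ : -1 < μ) (k : ℕ) : 0 < besselCliffordCoeff μ k := by
  have hΓ : 0 < Gamma (μ + k + 1) := Gamma_pos_of_pos (by linarith [k.cast_nonneg (α := ℝ)])
  unfold besselCliffordCoeff
  positivity

lemma add_one_mul_besselCliffordCoeff_succ (μ : ℝ) (k : ℕ) :
    ((k : ℝ) + 1) * besselCliffordCoeff μ (k + 1) = besselCliffordCoeff (μ + 1) k := by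
  have hk : (k : ℝ) + 1 ≠ 0 := by positivity
  have hΓ : μ + ((k + 1 : ℕ) : ℝ) + 1 = μ + 1 + k + 1 := by push_cast; ring
  rw [besselCliffordCoeff, besselCliffordCoeff, hΓ, Nat.factorial_succ]
  push_cast
  field_simp

lemma besselCliffordCoeff_eq_mul (μ : ℝ) (k : ℕ) :
    besselCliffordCoeff μ k = (μ + k + 1) * besselCliffordCoeff (μ + 1) k := by
  have hΓ : μ + 1 + (k : ℝ) + 1 = μ + k + 1 + 1 := by ring
  rw [besselCliffordCoeff, besselCliffordCoeff, hΓ]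
  rcases eq_or_ne (μ + k + 1) 0 with h | h
  · simp [h]
  · rw [Gamma_add_one h]
    field_simp

lemma summable_besselClifford (μ y : ℝ) :
    Summable fun k : ℕ ↦ besselCliffordCoeff μ k * y ^ k := by
  refine summable_of_ratio_norm_eventually_le one_half_lt_one ?_
  filter_upwards [tendsto_natCast_atTop_atTop.eventually_ge_atTop (2 * |y|),
    tendsto_natCast_atTop_atTop.eventually_ge_atTop (-μ)] with k hky hkμ
  have ratio : besselCliffordCoeff μ k =
      (μ + k + 1) * ((k + 1) * besselCliffordCoeff μ (k + 1)) := by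
    rw [add_one_mul_besselCliffordCoeff_succ, besselCliffordCoeff_eq_mul]
  have ratio_large : 2 * |y| ≤ (μ + k + 1) * (k + 1) := by nlinarith [abs_nonneg y]
  simp only [ratio, norm_mul, norm_pow, norm_eq_abs]
  rw [abs_of_nonneg (by linarith : 0 ≤ μ + k + 1), abs_of_nonneg (by positivity : 0 ≤ (k : ℝ) + 1)]
  calc |besselCliffordCoeff μ (k + 1)| * |y| ^ (k + 1)
      = 1 / 2 * (2 * |y|) * (|besselCliffordCoeff μ (k + 1)| * |y| ^ k) := by ring
    _ ≤ 1 / 2 * ((μ + k + 1) * (k + 1)) * (|besselCliffordCoeff μ (k + 1)| * |y| ^ k) := by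
      gcongr
    _ = _ := by ring

lemma hasSum_besselClifford (μ y : ℝ) :
    HasSum (fun k : ℕ ↦ besselCliffordCoeff μ k * y ^ k) (besselClifford μ y) :=
  (summable_besselClifford μ y).hasSum

lemma hasSum_deriv_besselClifford (μ y : ℝ) :
    HasSum (fun k : ℕ ↦ besselCliffordCoeff μ k * (k * y ^ (k - 1)))
      (besselClifford (μ + 1) y) := by
  rw [← hasSum_nat_add_iff' 1]
  simp only [Finset.range_one, Finset.sum_singleton, Nat.cast_zero, zero_mul, mul_zero, sub_zero]
  refine (hasSum_besselClifford (μ + 1) y).congr_fun fun k ↦ ?_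
  rw [← add_one_mul_besselCliffordCoeff_succ, Nat.add_sub_cancel]
  push_cast
  ring

lemma besselClifford_pos (hμ : -1 < μ) {y : ℝ} (hy : 0 ≤ y) : 0 < besselClifford μ y := by
  refine (summable_besselClifford μ y).tsum_pos (fun k ↦ ?_) 0 ?_
  · have := besselCliffordCoeff_pos hμ k
    positivity
  · simpa using besselCliffordCoeff_pos hμ 0

lemma besselClifford_eq_add (μ y : ℝ) :
    besselClifford μ y = (μ + 1) * besselClifford (μ + 1) y + y * besselClifford (μ + 2) y := by
  have h := ((hasSum_besselClifford (μ + 1) y).mul_left (μ + 1)).add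
    ((hasSum_deriv_besselClifford (μ + 1) y).mul_left y)
  rw [add_assoc μ, one_add_one_eq_two] at h
  refine (hasSum_besselClifford μ y).unique (h.congr_fun fun k ↦ ?_)
  rw [besselCliffordCoeff_eq_mul]
  rcases k with _ | k
  · simp
  · rw [Nat.add_sub_cancel, pow_succ]
    ring

lemma hasDerivAt_besselClifford (μ y : ℝ) :
    HasDerivAt (besselClifford μ) (besselClifford (μ + 1) y) y := by
  have term_deriv_le (k : ℕ) (z : ℝ) (hz : z ∈ Metric.ball (0 : ℝ) (|y| + 1)) :
      ‖besselCliffordCoeff μ k * (k * z ^ (k - 1))‖ ≤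
        ‖besselCliffordCoeff μ k * (k * (|y| + 1) ^ (k - 1))‖ := by
    have hz' : |z| ≤ |(|y| + 1)| := by
      rw [abs_of_nonneg (by positivity : 0 ≤ |y| + 1)]
      exact (mem_ball_zero_iff.1 hz).le
    simp only [norm_mul, norm_pow, norm_eq_abs]
    gcongr
  rw [← (hasSum_deriv_besselClifford μ y).tsum_eq]
  exact hasDerivAt_tsum_of_isPreconnected (hasSum_deriv_besselClifford μ (|y| + 1)).summable.norm
    Metric.isOpen_ball (convex_ball (0 : ℝ) (|y| + 1)).isPreconnected
    (fun k z _ ↦ (hasDerivAt_pow k z).const_mul _) term_deriv_le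
    (Metric.mem_ball_self (by positivity)) (summable_besselClifford μ 0) (by simp)

lemma continuous_besselClifford (μ : ℝ) : Continuous (besselClifford μ) :=
  continuous_iff_continuousAt.2 fun y ↦ (hasDerivAt_besselClifford μ y).continuousAt

end BesselClifford

section BesselI

variable {ν x : ℝ}

lemma besselI_eq_rpow_mul_besselClifford (ν : ℝ) (hx : 0 < x) :
    besselI ν x = (x / 2) ^ ν * besselClifford ν (x ^ 2 / 4) := by
  rw [besselI, besselClifford, ← tsum_mul_left]
  congr! 2 with k
  have hpow : (x / 2) ^ (2 * (k : ℝ)) = (x ^ 2 / 4) ^ k := by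
    rw [rpow_mul (by positivity), rpow_natCast, rpow_two, div_pow]
    norm_num
  rw [rpow_add (by positivity), hpow, besselCliffordCoeff]
  ring

lemma besselI_pos (hν : -1 < ν) (hx : 0 < x) : 0 < besselI ν x := by
  have := besselClifford_pos hν (by positivity : 0 ≤ x ^ 2 / 4)
  rw [besselI_eq_rpow_mul_besselClifford ν hx]
  positivity

lemma besselI_eq_add (ν : ℝ) (hx : 0 < x) :
    besselI ν x = 2 * (ν + 1) / x * besselI (ν + 1) x + besselI (ν + 2) x := by
  have hx2 : x / 2 ≠ 0 := by positivity
  simp only [besselI_eq_rpow_mul_besselClifford _ hx]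
  rw [besselClifford_eq_add, rpow_add_one hx2, rpow_add (by positivity), rpow_two]
  field_simp
  ring

lemma hasDerivAt_besselI (ν : ℝ) (hx : 0 < x) :
    HasDerivAt (besselI ν) (ν / x * besselI ν x + besselI (ν + 1) x) x := by
  have hx2 : x / 2 ≠ 0 := by positivity
  have hsq : HasDerivAt (fun t : ℝ ↦ t ^ 2 / 4) (x / 2) x :=
    ((hasDerivAt_pow 2 x).div_const 4).congr_deriv (by norm_num; ring)
  have h := (((hasDerivAt_id x).div_const 2).rpow_const (p := ν) (.inl hx2)).mul
    ((hasDerivAt_besselClifford ν (x ^ 2 / 4)).comp x hsq)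
  refine (h.congr_deriv ?_).congr_of_eventuallyEq ?_
  · simp only [besselI_eq_rpow_mul_besselClifford _ hx, rpow_add_one hx2, rpow_sub_one hx2, id,
      Function.comp_apply]
    field_simp
  · filter_upwards [lt_mem_nhds hx] with t ht
    exact besselI_eq_rpow_mul_besselClifford ν ht

lemma hasDerivAt_besselI_succ (ν : ℝ) (hx : 0 < x) :
    HasDerivAt (besselI (ν + 1)) (besselI ν x - (ν + 1) / x * besselI (ν + 1) x) x := by
  refine (hasDerivAt_besselI (ν + 1) hx).congr_deriv ?_
  rw [besselI_eq_add ν hx, add_assoc ν, one_add_one_eq_two]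
  ring

lemma rpow_mul_besselI (a ν : ℝ) (hx : 0 < x) :
    x ^ a * besselI ν x = x ^ (a + ν) * (besselClifford ν (x ^ 2 / 4) / 2 ^ ν) := by
  rw [besselI_eq_rpow_mul_besselClifford ν hx, div_rpow hx.le zero_le_two, rpow_add hx]
  ring

lemma tendsto_rpow_mul_besselI_nhdsGT_zero {a ν : ℝ} (h : 0 < a + ν) :
    Tendsto (fun t ↦ t ^ a * besselI ν t) (𝓝[>] 0) (𝓝 0) := by
  have hcont : Continuous fun t : ℝ ↦ t ^ (a + ν) * (besselClifford ν (t ^ 2 / 4) / 2 ^ ν) := by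
    have := continuous_besselClifford ν
    have := continuous_rpow_const h.le
    fun_prop
  have hlim := hcont.tendsto 0
  rw [zero_rpow h.ne', zero_mul] at hlim
  refine (hlim.mono_left nhdsWithin_le_nhds).congr' ?_
  filter_upwards [self_mem_nhdsWithin] with t ht
  exact (rpow_mul_besselI a ν ht).symm

lemma intervalIntegrable_rpow_mul_besselI {a ν : ℝ} (h : -1 < a + ν) (hx : 0 ≤ x) :
    IntervalIntegrable (fun t ↦ t ^ a * besselI ν t) volume 0 x := by
  have hcont : Continuous fun t : ℝ ↦ besselClifford ν (t ^ 2 / 4) / 2 ^ ν := by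
    have := continuous_besselClifford ν
    fun_prop
  refine ((intervalIntegral.intervalIntegrable_rpow' h).mul_continuousOn
    hcont.continuousOn).congr fun t ht ↦ ?_
  rw [uIoc_of_le hx] at ht
  exact (rpow_mul_besselI a ν ht.1).symm

end BesselI

section ExpIntegral

variable {γ ν x : ℝ}

lemma intervalIntegrable_exp_mul_rpow_mul_besselI (c : ℝ) (hν : -(1 / 2) < ν) (hx : 0 ≤ x) :
    IntervalIntegrable (fun t ↦ exp (c * t) * t ^ ν * besselI ν t) volume 0 x := by
  have hcont : Continuous fun t ↦ exp (c * t) := by fun_prop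
  simpa only [mul_assoc] using (intervalIntegrable_rpow_mul_besselI (a := ν) (ν := ν)
    (by linarith) hx).continuousOn_mul hcont.continuousOn

lemma hasDerivAt_exp_mul_rpow_mul_besselI_sub {σ : ℝ} (hσ : σ ^ 2 = 1) (ν : ℝ) (hx : 0 < x) :
    HasDerivAt (fun t ↦ exp (σ * t) * (t ^ (ν + 1) * (besselI ν t - σ * besselI (ν + 1) t)))
      ((2 * ν + 1) * (exp (σ * x) * x ^ ν * besselI ν x)) x := by
  have h := ((hasDerivAt_id x).const_mul σ).exp.mul
    ((hasDerivAt_rpow_const (p := ν + 1) (.inl hx.ne')).mul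
      ((hasDerivAt_besselI ν hx).sub ((hasDerivAt_besselI_succ ν hx).const_mul σ)))
  refine h.congr_deriv ?_
  simp only [id, Pi.mul_apply, Pi.sub_apply, add_sub_cancel_right, rpow_add_one hx.ne']
  field_simp
  linear_combination (-(x * besselI (ν + 1) x)) * hσ

lemma integral_exp_mul_rpow_mul_besselI {σ : ℝ} (hσ : σ ^ 2 = 1) (hν : -(1 / 2) < ν)
    (hx : 0 < x) :
    ∫ t in (0 : ℝ)..x, exp (σ * t) * t ^ ν * besselI ν t =
      exp (σ * x) * (x ^ (ν + 1) * (besselI ν x - σ * besselI (ν + 1) x)) / (2 * ν + 1) := by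
  have hlim : Tendsto (fun t ↦ exp (σ * t) *
      (t ^ (ν + 1) * (besselI ν t - σ * besselI (ν + 1) t))) (𝓝[>] 0) (𝓝 0) := by
    have hexp : Tendsto (fun t ↦ exp (σ * t)) (𝓝[>] 0) (𝓝 (exp (σ * 0))) :=
      ((by fun_prop : Continuous fun t ↦ exp (σ * t)).tendsto 0).mono_left nhdsWithin_le_nhds
    have h := hexp.mul ((tendsto_rpow_mul_besselI_nhdsGT_zero (a := ν + 1) (ν := ν)
      (by linarith)).sub ((tendsto_rpow_mul_besselI_nhdsGT_zero (a := ν + 1) (ν := ν + 1)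
      (by linarith)).const_mul σ))
    rw [mul_zero, sub_zero, mul_zero] at h
    exact h.congr fun t ↦ by ring
  have hFTC := intervalIntegral.integral_eq_sub_of_hasDerivAt_of_tendsto hx
    (fun t ht ↦ hasDerivAt_exp_mul_rpow_mul_besselI_sub hσ ν ht.1)
    ((intervalIntegrable_exp_mul_rpow_mul_besselI σ hν hx.le).const_mul (2 * ν + 1)) hlim
    ((hasDerivAt_exp_mul_rpow_mul_besselI_sub hσ ν hx).continuousAt.tendsto.mono_left
      nhdsWithin_le_nhds)
  rw [intervalIntegral.integral_const_mul, sub_zero] at hFTC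
  rw [eq_div_iff (by linarith), mul_comm, hFTC]

lemma besselI_succ_lt (hν : -(1 / 2) < ν) (hx : 0 < x) : besselI (ν + 1) x < besselI ν x := by
  have hpos : 0 < ∫ t in (0 : ℝ)..x, exp (1 * t) * t ^ ν * besselI ν t := by
    refine intervalIntegral.intervalIntegral_pos_of_pos_on
      (intervalIntegrable_exp_mul_rpow_mul_besselI 1 hν hx.le) (fun t ht ↦ ?_) hx
    have := ht.1
    have := besselI_pos (by linarith : -1 < ν) ht.1
    positivity
  rw [integral_exp_mul_rpow_mul_besselI (one_pow 2) hν hx,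
    div_pos_iff_of_pos_right (by linarith), mul_pos_iff_of_pos_left (exp_pos _),
    mul_pos_iff_of_pos_left (by positivity), one_mul] at hpos
  exact sub_pos.1 hpos

lemma mul_besselI_lt (hν : -(3 / 2) < ν) (hx : 0 < x) :
    x * besselI ν x < (2 * (ν + 1) + x) * besselI (ν + 1) x := by
  have hlt : besselI (ν + 2) x < besselI (ν + 1) x := by
    have := besselI_succ_lt (ν := ν + 1) (by linarith) hx
    rwa [add_assoc, one_add_one_eq_two] at this
  calc x * besselI ν x = 2 * (ν + 1) * besselI (ν + 1) x + x * besselI (ν + 2) x := by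
        rw [besselI_eq_add ν hx]
        field_simp
    _ < 2 * (ν + 1) * besselI (ν + 1) x + x * besselI (ν + 1) x := by gcongr
    _ = _ := by ring

lemma integral_exp_neg_mul_rpow_mul_besselI_le (hγ : γ ≤ 1) (hν : -(1 / 2) < ν) (hx : 0 < x) :
    ∫ t in (0 : ℝ)..x, exp (-γ * t) * t ^ ν * besselI ν t ≤
      exp (-γ * x) * (x ^ (ν + 1) * (besselI ν x + besselI (ν + 1) x)) / (2 * ν + 1) := by
  have exp_split (t : ℝ) : exp (-γ * t) = exp ((1 - γ) * t) * exp (-1 * t) := by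
    rw [← exp_add]
    ring_nf
  calc ∫ t in (0 : ℝ)..x, exp (-γ * t) * t ^ ν * besselI ν t
      ≤ ∫ t in (0 : ℝ)..x, exp ((1 - γ) * x) * (exp (-1 * t) * t ^ ν * besselI ν t) := by
        refine intervalIntegral.integral_mono_on_of_le_Ioo hx.le
          (intervalIntegrable_exp_mul_rpow_mul_besselI (-γ) hν hx.le)
          ((intervalIntegrable_exp_mul_rpow_mul_besselI (-1) hν hx.le).const_mul _)
          fun t ht ↦ ?_
        have ht0 := ht.1
        have hI := besselI_pos (by linarith : -1 < ν) ht0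
        have hexp : exp ((1 - γ) * t) ≤ exp ((1 - γ) * x) :=
          exp_le_exp.2 (mul_le_mul_of_nonneg_left ht.2.le (by linarith))
        rw [exp_split, mul_assoc, mul_assoc, mul_assoc]
        gcongr
    _ = _ := by
        rw [intervalIntegral.integral_const_mul,
          integral_exp_mul_rpow_mul_besselI (by norm_num) hν hx, exp_split x]
        ring

lemma integral_exp_neg_mul_rpow_mul_besselI_lt (hγ : γ ≤ 1) (hν : -(1 / 2) < ν) (hx : 0 < x) :
    ∫ t in (0 : ℝ)..x, exp (-γ * t) * t ^ ν * besselI ν t <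
      2 * (ν + 1 + x) / (2 * ν + 1) * (exp (-γ * x) * x ^ ν * besselI (ν + 1) x) := by
  have hden : 0 < 2 * ν + 1 := by linarith
  have hsum : x * (besselI ν x + besselI (ν + 1) x) < 2 * (ν + 1 + x) * besselI (ν + 1) x := by
    linarith [mul_besselI_lt (by linarith : -(3 / 2) < ν) hx]
  calc ∫ t in (0 : ℝ)..x, exp (-γ * t) * t ^ ν * besselI ν t
      ≤ exp (-γ * x) * (x ^ (ν + 1) * (besselI ν x + besselI (ν + 1) x)) / (2 * ν + 1) :=
        integral_exp_neg_mul_rpow_mul_besselI_le hγ hν hx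
    _ = exp (-γ * x) * x ^ ν / (2 * ν + 1) * (x * (besselI ν x + besselI (ν + 1) x)) := by
        rw [rpow_add_one hx.ne']
        ring
    _ < exp (-γ * x) * x ^ ν / (2 * ν + 1) * (2 * (ν + 1 + x) * besselI (ν + 1) x) := by gcongr
    _ = _ := by ring

lemma hasDerivAt_exp_neg_mul_rpow_mul_besselI_succ (γ ν : ℝ) (hx : 0 < x) :
    HasDerivAt (fun t ↦ exp (-γ * t) * t ^ ν * besselI (ν + 1) t)
      (exp (-γ * x) * x ^ ν * (besselI ν x - (γ + 1 / x) * besselI (ν + 1) x)) x := by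
  have h := (((hasDerivAt_id x).const_mul (-γ)).exp.mul
    (hasDerivAt_rpow_const (p := ν) (.inl hx.ne'))).mul (hasDerivAt_besselI_succ ν hx)
  refine h.congr_deriv ?_
  simp only [id, Pi.mul_apply, rpow_sub_one hx.ne']
  field_simp
  ring

lemma besselI_le_mul_sub {a M : ℝ} (ha : 0 < a) (hax : a ≤ x) (hν : -(1 / 2) < ν) (hM : 1 ≤ M)
    (hMa : 1 ≤ M * (1 - γ - 1 / a)) :
    besselI ν x ≤ M * (besselI ν x - (γ + 1 / x) * besselI (ν + 1) x) := by
  have hx := ha.trans_le hax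
  have hI := besselI_pos (by linarith : -1 < ν) hx
  have hI' := besselI_pos (by linarith : -1 < ν + 1) hx
  rcases le_total (γ + 1 / x) 0 with hneg | hpos
  · have hprod : (γ + 1 / x) * besselI (ν + 1) x ≤ 0 :=
      mul_nonpos_of_nonpos_of_nonneg hneg hI'.le
    calc besselI ν x ≤ M * besselI ν x := le_mul_of_one_le_left hI.le hM
      _ ≤ M * (besselI ν x - (γ + 1 / x) * besselI (ν + 1) x) := by
        gcongr
        linarith
  · have hprod : (γ + 1 / x) * besselI (ν + 1) x ≤ (γ + 1 / a) * besselI ν x :=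
      calc (γ + 1 / x) * besselI (ν + 1) x ≤ (γ + 1 / x) * besselI ν x := by
            gcongr
            exact (besselI_succ_lt hν hx).le
        _ ≤ (γ + 1 / a) * besselI ν x := by gcongr
    calc besselI ν x ≤ M * (1 - γ - 1 / a) * besselI ν x := le_mul_of_one_le_left hI.le hMa
      _ = M * (besselI ν x - (γ + 1 / a) * besselI ν x) := by ring
      _ ≤ M * (besselI ν x - (γ + 1 / x) * besselI (ν + 1) x) := by gcongr

lemma integral_exp_neg_mul_rpow_mul_besselI_le_sub {a M : ℝ} (ha : 0 < a) (hax : a ≤ x)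
    (hν : -(1 / 2) < ν) (hM : 1 ≤ M) (hMa : 1 ≤ M * (1 - γ - 1 / a)) :
    ∫ t in a..x, exp (-γ * t) * t ^ ν * besselI ν t ≤
      M * (exp (-γ * x) * x ^ ν * besselI (ν + 1) x) -
        M * (exp (-γ * a) * a ^ ν * besselI (ν + 1) a) := by
  have hderiv (t : ℝ) (ht : a ≤ t) :=
    (hasDerivAt_exp_neg_mul_rpow_mul_besselI_succ γ ν (ha.trans_le ht)).const_mul M
  have hint : IntervalIntegrable (fun t ↦ exp (-γ * t) * t ^ ν * besselI ν t) volume a x :=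
    (intervalIntegrable_exp_mul_rpow_mul_besselI (-γ) hν (ha.le.trans hax)).mono_set <| by
      rw [uIcc_of_le hax, uIcc_of_le (ha.le.trans hax)]
      exact Icc_subset_Icc_left ha.le
  refine intervalIntegral.integral_le_sub_of_hasDeriv_right_of_le hax
    (fun t ht ↦ (hderiv t ht.1).continuousAt.continuousWithinAt)
    (fun t ht ↦ (hderiv t ht.1.le).hasDerivWithinAt)
    ((intervalIntegrable_iff_integrableOn_Icc_of_le hax).1 hint) fun t ht ↦ ?_
  have ht0 := ha.trans ht.1
  rw [mul_left_comm M]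
  gcongr
  exact besselI_le_mul_sub ha ht.1.le hν hM hMa

end ExpIntegral

theorem stmt_0_general (γ x₀ ν : ℝ) (hγ1 : γ < 1) (hx₀ : 1 / (1 - γ) < x₀)
    (hν : -(1 / 2) < ν) (x : ℝ) (hx : x₀ ≤ x) :
    ∫ t in (0 : ℝ)..x, exp (-γ * t) * t ^ ν * besselI ν t <
      max (2 * (ν + 1 + x₀) / (2 * ν + 1)) (x₀ / ((1 - γ) * x₀ - 1)) *
        (exp (-γ * x) * x ^ ν * besselI (ν + 1) x) := by
  have hγ : 0 < 1 - γ := sub_pos.2 hγ1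
  have hx₀_pos : 0 < x₀ := (one_div_pos.2 hγ).trans hx₀
  have hden : 0 < (1 - γ) * x₀ - 1 := by linarith [(div_lt_iff₀' hγ).1 hx₀]
  set M := max (2 * (ν + 1 + x₀) / (2 * ν + 1)) (x₀ / ((1 - γ) * x₀ - 1))
  have hM : 1 ≤ M := le_max_of_le_left <| (one_le_div (by linarith)).2 (by linarith)
  have hMx₀ : 1 ≤ M * (1 - γ - 1 / x₀) :=
    calc 1 ≤ M * ((1 - γ) * x₀ - 1) / x₀ :=
          (one_le_div hx₀_pos).2 ((div_le_iff₀ hden).1 (le_max_right _ _))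
      _ = M * (1 - γ - 1 / x₀) := by field_simp
  have hI := besselI_pos (by linarith : -1 < ν + 1) hx₀_pos
  have head : ∫ t in (0 : ℝ)..x₀, exp (-γ * t) * t ^ ν * besselI ν t <
      M * (exp (-γ * x₀) * x₀ ^ ν * besselI (ν + 1) x₀) :=
    (integral_exp_neg_mul_rpow_mul_besselI_lt hγ1.le hν hx₀_pos).trans_le <|
      mul_le_mul_of_nonneg_right (le_max_left _ _) (by positivity)
  have tail := integral_exp_neg_mul_rpow_mul_besselI_le_sub hx₀_pos hx hν hM hMx₀
  have split := intervalIntegral.integral_interval_sub_left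
    (intervalIntegrable_exp_mul_rpow_mul_besselI (-γ) hν (hx₀_pos.le.trans hx))
    (intervalIntegrable_exp_mul_rpow_mul_besselI (-γ) hν hx₀_pos.le)
  linarith

theorem stmt_0 (γ x₀ ν : ℝ) (hγ0 : 0 < γ) (hγ1 : γ < 1) (hx₀ : 1 / (1 - γ) < x₀)
    (hν : -(1/2) < ν) (x : ℝ) (hx : x₀ ≤ x) :
    ∫ t in (0 : ℝ)..x, Real.exp (-γ * t) * t ^ ν * besselI ν t <
      max (2 * (ν + 1 + x₀) / (2 * ν + 1)) (x₀ / ((1 - γ) * x₀ - 1)) *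
        (Real.exp (-γ * x) * x ^ ν * besselI (ν + 1) x) :=
  stmt_0_general γ x₀ ν hγ1 hx₀ hν x hx
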